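/- Let k be a positive integer. For each pair (i,j) with 0 ≤ i, j ≤ k-1, let b^{i,j} : ℤ → ℝ be finitely supported functions (independent of q) satisfying b^{j,i}_m = b^{i,j}_{-m} for all m ∈ ℤ. For each positive integer q, let B̃(q) be the kq × kq real symmetric block matrix whose (i,j) q × q block has (m,l) entry b^{i,j}_{m-l}, and for ω ∈ [-π, π] let B(ω) be the k × k Hermitian matrix with (i,j) entry Σ_{m ∈ ℤ} b^{i,j}_m · e^{-i ω m}. Then, as q → ∞, λ_min(B̃(q)) converges to min_{ω ∈ [-π,π]} λ_min(B(ω)) and λ_max(B̃(q)) converges to max_{ω ∈ [-π,π]} λ_max(B(ω)). -/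

import Mathlib

open Matrix

/-!
Let `E(ω)` be the `ι × (ι × Fin q)` matrix that evaluates vector-valued trigonometric polynomials
of degree `< q` at `ω`. The Toeplitz matrix is the average of the compressions
`E(ω)ᴴ B(ω) E(ω)` over `ω ∈ [-π, π]`, and the average of `E(ω)ᴴ E(ω)` is the identity; hence
`L ≤ B(ω)` for all `ω` implies `L ≤ B̃(q)` in the Loewner order. Conversely `E(ω) E(ω)ᴴ = q`, and
`q⁻¹ E(ω) B̃(q) E(ω)ᴴ` is a Fejér mean of the Fourier series of `B` at `ω`, so it tends to `B(ω)`.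
Testing the bound `λ_min(B̃(q)) ≤ q⁻¹ E(ω) B̃(q) E(ω)ᴴ` on an eigenvector of `B(ω)` for the
minimizing `ω` gives the matching upper bound. The statement for the largest eigenvalue follows by
negating `b`.
-/

open Filter Topology MeasureTheory Complex
open scoped Real MatrixOrder ComplexOrder

lemma isLeast_neg_of_isGreatest {G : Type*} [AddCommGroup G] [PartialOrder G] [IsOrderedAddMonoid G]
    {s : Set G} {a : G} (h : IsGreatest s a) : IsLeast (-s) (-a) :=
  ⟨Set.neg_mem_neg.2 h.1, fun _ hx => neg_le.1 (h.2 hx)⟩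

section Spectrum

variable {n : Type*} [Fintype n] [DecidableEq n]

lemma mem_spectrum_iff_exists_mulVec_eq_smul {K : Type*} [Field K] {A : Matrix n n K} {μ : K} :
    μ ∈ spectrum K A ↔ ∃ v : n → K, v ≠ 0 ∧ A *ᵥ v = μ • v := by
  have sub_mulVec_eq_zero (v : n → K) :
      (algebraMap K (Matrix n n K) μ - A) *ᵥ v = 0 ↔ A *ᵥ v = μ • v := by
    rw [sub_mulVec, Algebra.algebraMap_eq_smul_one, smul_mulVec, one_mulVec, sub_eq_zero, eq_comm]
  simp only [spectrum.mem_iff, isUnit_iff_isUnit_det, isUnit_iff_ne_zero, not_not,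
    ← exists_mulVec_eq_zero_iff, sub_mulVec_eq_zero]

lemma mem_spectrum_real_iff_exists_mulVec_eq_smul {A : Matrix n n ℂ} {μ : ℝ} :
    μ ∈ spectrum ℝ A ↔ ∃ v : n → ℂ, v ≠ 0 ∧ A *ᵥ v = (μ : ℂ) • v := by
  rw [← spectrum.algebraMap_mem_iff ℂ, mem_spectrum_iff_exists_mulVec_eq_smul,
    coe_algebraMap]

lemma spectrum_map_algebraMap {K L : Type*} [Field K] [Field L] [Algebra K L]
    (A : Matrix n n K) : spectrum K (A.map (algebraMap K L)) = spectrum K A := by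
  ext μ
  have map_resolvent : algebraMap K (Matrix n n L) μ - A.map (algebraMap K L) =
      (algebraMap K L).mapMatrix (algebraMap K (Matrix n n K) μ - A) := by
    ext i j
    simp [algebraMap_matrix_apply, apply_ite (algebraMap K L)]
  rw [spectrum.mem_iff, spectrum.mem_iff, map_resolvent, isUnit_iff_isUnit_det,
    isUnit_iff_isUnit_det, ← RingHom.map_det, isUnit_map_iff]

lemma le_rayleigh_of_algebraMap_le {A : Matrix n n ℂ} {μ : ℝ} (h : algebraMap ℝ _ μ ≤ A)
    {v : n → ℂ} (hv : v ≠ 0) : μ ≤ (star v ⬝ᵥ A *ᵥ v).re / (star v ⬝ᵥ v).re := by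
  have norm_sq_pos : 0 < (star v ⬝ᵥ v).re := (pos_iff.1 (dotProduct_star_self_pos_iff.2 hv)).1
  have form_nonneg := PosSemidef.dotProduct_mulVec_nonneg h v
  rw [sub_mulVec, dotProduct_sub, sub_nonneg, Algebra.algebraMap_eq_smul_one, smul_mulVec,
    one_mulVec, dotProduct_smul] at form_nonneg
  rw [le_div_iff₀ norm_sq_pos]
  simpa using (le_def.1 form_nonneg).1

end Spectrum

lemma sum_range_sum_range_sub {G : Type*} [AddCommGroup G] (g : ℤ → G) (q : ℕ) :
    ∑ m ∈ Finset.range q, ∑ l ∈ Finset.range q, g (m - l) =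
      ∑ r ∈ Finset.range q, (∑ n ∈ Finset.range (r + 1), (g n + g (-n)) - g 0) := by
  induction q with
  | zero => simp
  | succ q ih =>
    have last_row : ∑ l ∈ Finset.range (q + 1), g (q - l) = ∑ n ∈ Finset.range (q + 1), g n := by
      rw [← Finset.sum_range_reflect]
      refine Finset.sum_congr rfl fun l hl => congrArg g ?_
      grind
    have last_column :
        ∑ m ∈ Finset.range (q + 1), g (m - q) = ∑ n ∈ Finset.range (q + 1), g (-n) := by
      rw [← Finset.sum_range_reflect]
      refine Finset.sum_congr rfl fun m hm => congrArg g ?_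
      grind
    calc ∑ m ∈ Finset.range (q + 1), ∑ l ∈ Finset.range (q + 1), g (m - l)
      _ = ∑ m ∈ Finset.range q, ∑ l ∈ Finset.range q, g (m - l) +
          (∑ l ∈ Finset.range (q + 1), g (q - l) +
            ∑ m ∈ Finset.range (q + 1), g (m - q) - g 0) := by
        simp only [Finset.sum_range_succ _ q, Finset.sum_add_distrib, sub_self]
        abel
      _ = ∑ r ∈ Finset.range (q + 1), (∑ n ∈ Finset.range (r + 1), (g n + g (-n)) - g 0) := by
        rw [last_row, last_column, ih, ← Finset.sum_add_distrib, ← Finset.sum_range_succ]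

lemma tendsto_fejer_mean {E : Type*} [NormedAddCommGroup E] [NormedSpace ℝ E] {g : ℤ → E} {a : E}
    (hg : HasSum g a) :
    Tendsto (fun q : ℕ =>
      (q : ℝ)⁻¹ • ∑ m ∈ Finset.range q, ∑ l ∈ Finset.range q, g (m - l)) atTop (𝓝 a) := by
  have symmetric_sums : Tendsto
      (fun r : ℕ => ∑ n ∈ Finset.range (r + 1), (g n + g (-n)) - g 0) atTop (𝓝 a) := by
    simpa using ((hg.nat_add_neg.tendsto_sum_nat.comp (tendsto_add_atTop_nat 1)).sub_const (g 0))
  simpa only [sum_range_sum_range_sub] using symmetric_sums.cesaro_smul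

lemma posSemidef_integral {n α : Type*} [Finite n] [MeasurableSpace α] {μ : Measure α}
    {F : α → Matrix n n ℂ} (hint : ∀ i j, Integrable (fun t => F t i j) μ)
    (hpos : ∀ᵐ t ∂μ, (F t).PosSemidef) : (of fun i j => ∫ t, F t i j ∂μ).PosSemidef := by
  have := Fintype.ofFinite n
  refine .of_dotProduct_mulVec_nonneg ?_ fun v => ?_
  · ext i j
    rw [conjTranspose_apply, of_apply, of_apply, star_def, ← integral_conj]
    refine integral_congr_ae ?_
    filter_upwards [hpos] with t ht using ht.isHermitian.apply i j
  · have quadratic_form : star v ⬝ᵥ (of fun i j => ∫ t, F t i j ∂μ) *ᵥ v =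
        ∫ t, star v ⬝ᵥ F t *ᵥ v ∂μ := by
      simp only [dotProduct, mulVec, of_apply]
      rw [integral_finsetSum _ fun i _ =>
        (integrable_finsetSum _ fun j _ => (hint i j).mul_const _).const_mul _]
      simp only [integral_const_mul,
        integral_finsetSum _ fun j _ => (hint _ j).mul_const _, integral_mul_const]
    rw [quadratic_form]
    refine integral_nonneg_of_ae ?_
    filter_upwards [hpos] with t ht using ht.dotProduct_mulVec_nonneg v

lemma integral_exp_I_mul_int (n : ℤ) :
    ∫ ω in (-π)..π, exp (I * ω * n) = if n = 0 then (2 * π : ℂ) else 0 := by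
  split_ifs with hn
  · simp [hn, two_mul]
  · have periodic : exp (I * n * π) = exp (I * n * (-π : ℝ)) := by
      rw [exp_eq_exp_iff_exists_int]
      exact ⟨n, by push_cast; ring⟩
    simp only [mul_right_comm I _ (n : ℂ)]
    rw [integral_exp_mul_complex (by simp [hn]), periodic, sub_self, zero_div]

section BlockToeplitz

/-- The block Toeplitz matrix `B̃(q)`. Rows and columns are indexed by pairs (block, position inside
the block). -/
def blockToeplitz {ι R : Type*} (b : ι → ι → ℤ → R) (q : ℕ) :
    Matrix (ι × Fin q) (ι × Fin q) R :=
  of fun p r => b p.1 r.1 ((p.2 : ℤ) - r.2)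

/-- The symbol `B(ω)` of a block Toeplitz matrix: the matrix of Fourier series with coefficients
`b`. An entry whose series is not absolutely convergent has the junk value `0`. -/
noncomputable def toeplitzSymbol {ι : Type*} (b : ι → ι → ℤ → ℂ) (ω : ℝ) : Matrix ι ι ℂ :=
  of fun i j => ∑' n : ℤ, b i j n * exp (-I * ω * n)

/-- The matrix `E(ω)` that maps the coefficients of an `ι`-indexed family of trigonometric
polynomials of degree `< q` to their values at `ω`. -/
noncomputable def fourierEval (ι : Type*) [DecidableEq ι] (q : ℕ) (ω : ℝ) :
    Matrix ι (ι × Fin q) ℂ :=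
  of fun i p => if i = p.1 then exp (-I * ω * (p.2 : ℕ)) else 0

variable {ι : Type*} {b : ι → ι → ℤ → ℂ}

lemma blockToeplitz_neg {R : Type*} [Neg R] (b : ι → ι → ℤ → R) (q : ℕ) :
    blockToeplitz (-b) q = -blockToeplitz b q := rfl

lemma blockToeplitz_sub {R : Type*} [Sub R] (b c : ι → ι → ℤ → R) (q : ℕ) :
    blockToeplitz (b - c) q = blockToeplitz b q - blockToeplitz c q := rfl

lemma toeplitzSymbol_neg (b : ι → ι → ℤ → ℂ) (ω : ℝ) :
    toeplitzSymbol (-b) ω = -toeplitzSymbol b ω := by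
  ext i j
  simp [toeplitzSymbol, tsum_neg]

open Kronecker in
lemma blockToeplitz_single_zero {R : Type*} [MulZeroOneClass R] (A : Matrix ι ι R) (q : ℕ) :
    blockToeplitz (fun i j => Pi.single 0 (A i j)) q = A ⊗ₖ (1 : Matrix (Fin q) (Fin q) R) := by
  ext p r
  have same_position : (p.2 : ℤ) - r.2 = 0 ↔ p.2 = r.2 := by omega
  simp [blockToeplitz, Pi.single_apply, one_apply, same_position]

lemma toeplitzSymbol_single_zero (A : Matrix ι ι ℂ) (ω : ℝ) :
    toeplitzSymbol (fun i j => Pi.single 0 (A i j)) ω = A := by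
  ext i j
  rw [toeplitzSymbol, of_apply, tsum_eq_single 0 fun n hn => by simp [hn]]
  simp

lemma isHermitian_blockToeplitz {R : Type*} [Star R] {b : ι → ι → ℤ → R}
    (hsym : ∀ i j n, star (b j i n) = b i j (-n)) (q : ℕ) : (blockToeplitz b q).IsHermitian := by
  ext p r
  simp [blockToeplitz, hsym]

lemma star_exp_neg_I_mul (x y : ℝ) : star (exp (-I * x * y)) = exp (I * x * y) := by
  simp [← exp_conj]

lemma toeplitzSymbol_apply_eq_finsum {i j : ι} (hb : (b i j).support.Finite) (ω : ℝ) :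
    toeplitzSymbol b ω i j = ∑ᶠ n : ℤ, b i j n * exp (-I * ω * n) :=
  tsum_eq_finsum (hb.subset (Function.support_mul_subset_left _ _))

lemma isHermitian_toeplitzSymbol (hsym : ∀ i j n, star (b j i n) = b i j (-n)) (ω : ℝ) :
    (toeplitzSymbol b ω).IsHermitian := by
  ext i j
  rw [conjTranspose_apply, toeplitzSymbol, of_apply, of_apply, tsum_star,
    ← (Equiv.neg ℤ).tsum_eq]
  refine tsum_congr fun n => ?_
  rw [star_mul', hsym]
  simp [← exp_conj]

lemma norm_mul_exp_neg_I (z : ℂ) (ω : ℝ) (n : ℤ) : ‖z * exp (-I * ω * n)‖ = ‖z‖ := by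
  simp [norm_exp]

lemma hasSum_toeplitzSymbol {i j : ι} (hb : Summable (b i j)) (ω : ℝ) :
    HasSum (fun n : ℤ => b i j n * exp (-I * ω * n)) (toeplitzSymbol b ω i j) := by
  refine Summable.hasSum (.of_norm ?_)
  simpa only [norm_mul_exp_neg_I] using hb.norm

lemma toeplitzSymbol_sub {b c : ι → ι → ℤ → ℂ} (hb : ∀ i j, Summable (b i j))
    (hc : ∀ i j, Summable (c i j)) (ω : ℝ) :
    toeplitzSymbol (b - c) ω = toeplitzSymbol b ω - toeplitzSymbol c ω := by
  ext i j
  rw [Matrix.sub_apply, ← ((hasSum_toeplitzSymbol (hb i j) ω).sub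
    (hasSum_toeplitzSymbol (hc i j) ω)).tsum_eq]
  simp only [toeplitzSymbol, of_apply, Pi.sub_apply, sub_mul]

lemma continuous_toeplitzSymbol_apply {i j : ι} (hb : Summable (b i j)) :
    Continuous fun ω => toeplitzSymbol b ω i j :=
  continuous_tsum (fun n => by fun_prop) hb.norm fun n ω => (norm_mul_exp_neg_I _ ω n).le

lemma integral_exp_mul_toeplitzSymbol {i j : ι} (hb : Summable (b i j)) (m : ℤ) :
    ∫ ω in (-π)..π, exp (I * ω * m) * toeplitzSymbol b ω i j = 2 * π * b i j m := by
  have termwise : HasSum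
      (fun n : ℤ => ∫ ω in (-π)..π, exp (I * ω * m) * (b i j n * exp (-I * ω * n)))
      (∫ ω in (-π)..π, exp (I * ω * m) * toeplitzSymbol b ω i j) := by
    refine intervalIntegral.hasSum_integral_of_dominated_convergence (fun n _ => ‖b i j n‖)
      (fun n => ?_) (fun n => ?_) (.of_forall fun ω _ => hb.norm) intervalIntegrable_const
      (.of_forall fun ω _ => (hasSum_toeplitzSymbol hb ω).mul_left _)
    · exact Continuous.aestronglyMeasurable (by fun_prop)
    · refine .of_forall fun ω _ => ?_
      simp [norm_exp]
  have coefficient (n : ℤ) : ∫ ω in (-π)..π, exp (I * ω * m) * (b i j n * exp (-I * ω * n)) =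
      if n = m then 2 * π * b i j m else 0 := by
    have shift (ω : ℝ) : exp (I * ω * m) * (b i j n * exp (-I * ω * n)) =
        b i j n * exp (I * ω * (m - n : ℤ)) := by
      rw [mul_left_comm, ← exp_add]
      push_cast
      ring_nf
    simp only [shift, intervalIntegral.integral_const_mul, integral_exp_I_mul_int]
    grind
  simp only [coefficient] at termwise
  exact termwise.unique (hasSum_ite_eq m _)

variable [Fintype ι] [DecidableEq ι]

lemma spectrum_blockToeplitz_ofReal (b : ι → ι → ℤ → ℝ) (q : ℕ) :
    spectrum ℝ (blockToeplitz (fun i j n => (b i j n : ℂ)) q) = spectrum ℝ (blockToeplitz b q) :=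
  spectrum_map_algebraMap (blockToeplitz b q)

lemma conjTranspose_fourierEval_mul_mul_apply (A : Matrix ι ι ℂ) {q : ℕ} (ω : ℝ)
    (p r : ι × Fin q) :
    ((fourierEval ι q ω)ᴴ * A * fourierEval ι q ω) p r =
      exp (I * ω * ((p.2 : ℤ) - r.2 : ℤ)) * A p.1 r.1 := by
  have phase : exp (I * ω * ((p.2 : ℤ) - r.2 : ℤ)) =
      exp (I * ω * (p.2 : ℕ)) * exp (-I * ω * (r.2 : ℕ)) := by
    rw [← exp_add]
    push_cast
    ring_nf
  have star_phase := star_exp_neg_I_mul ω (p.2 : ℕ)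
  push_cast at star_phase
  simp only [mul_apply, conjTranspose_apply, fourierEval, of_apply, apply_ite star, star_zero,
    star_phase, ite_mul, zero_mul, mul_ite, mul_zero, Finset.sum_ite_eq', Finset.mem_univ, if_true,
    phase]
  ring

lemma fourierEval_mul_mul_conjTranspose_apply {q : ℕ} (M : Matrix (ι × Fin q) (ι × Fin q) ℂ)
    (ω : ℝ) (i j : ι) :
    (fourierEval ι q ω * M * (fourierEval ι q ω)ᴴ) i j =
      ∑ m, ∑ l, M (i, m) (j, l) * exp (-I * ω * ((m : ℤ) - l : ℤ)) := by
  have phase (m l : Fin q) : exp (-I * ω * ((m : ℤ) - l : ℤ)) =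
      exp (-I * ω * (m : ℕ)) * exp (I * ω * (l : ℕ)) := by
    rw [← exp_add]
    push_cast
    ring_nf
  have star_phase (l : Fin q) := star_exp_neg_I_mul ω (l : ℕ)
  push_cast at star_phase
  simp only [mul_apply, conjTranspose_apply, fourierEval, of_apply, apply_ite star, star_zero,
    star_phase, ite_mul, zero_mul, mul_ite, mul_zero, Fintype.sum_prod_type, Finset.sum_ite_irrel,
    Finset.sum_const_zero, Finset.sum_ite_eq, Finset.mem_univ, if_true, phase, Finset.sum_mul]
  rw [Finset.sum_comm]
  refine Finset.sum_congr rfl fun m _ => Finset.sum_congr rfl fun l _ => ?_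
  ring

lemma fourierEval_mul_conjTranspose_self (q : ℕ) (ω : ℝ) :
    fourierEval ι q ω * (fourierEval ι q ω)ᴴ = (q : ℝ) • 1 := by
  ext i j
  have entry := fourierEval_mul_mul_conjTranspose_apply (q := q) 1 ω i j
  rw [Matrix.mul_one] at entry
  rw [entry]
  by_cases hij : i = j <;> simp [one_apply, hij]

lemma posSemidef_blockToeplitz {ι : Type*} [Finite ι] {b : ι → ι → ℤ → ℂ}
    (hb : ∀ i j, Summable (b i j))
    (hpos : ∀ ω ∈ Set.Icc (-π) π, (toeplitzSymbol b ω).PosSemidef) (q : ℕ) :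
    (blockToeplitz b q).PosSemidef := by
  classical
  have := Fintype.ofFinite ι
  let F (ω : ℝ) := (fourierEval ι q ω)ᴴ * toeplitzSymbol b ω * fourierEval ι q ω
  have F_apply (p r : ι × Fin q) : (fun ω => F ω p r) = fun ω : ℝ =>
      exp (I * ω * ((p.2 : ℤ) - r.2 : ℤ)) * toeplitzSymbol b ω p.1 r.1 :=
    funext fun ω => conjTranspose_fourierEval_mul_mul_apply (toeplitzSymbol b ω) ω p r
  have integral_F : (of fun p r => ∫ ω in Set.Ioc (-π) π, F ω p r) =
      (2 * π) • blockToeplitz b q := by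
    ext p r
    rw [of_apply, F_apply, ← intervalIntegral.integral_of_le (neg_le_self Real.pi_pos.le),
      integral_exp_mul_toeplitzSymbol (hb _ _)]
    simp [blockToeplitz]
  have integral_posSemidef : ((2 * π) • blockToeplitz b q).PosSemidef := by
    rw [← integral_F]
    refine posSemidef_integral (fun p r => ?_) ?_
    · have symbol_continuous := continuous_toeplitzSymbol_apply (hb p.1 r.1)
      rw [F_apply]
      exact Continuous.integrableOn_Ioc (by fun_prop)
    · filter_upwards [ae_restrict_mem measurableSet_Ioc] with ω hω
      exact (hpos ω (Set.Ioc_subset_Icc_self hω)).conjTranspose_mul_mul_same _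
  simpa only [inv_smul_smul₀ Real.two_pi_pos.ne'] using
    integral_posSemidef.smul (inv_nonneg.2 Real.two_pi_pos.le)

lemma algebraMap_le_blockToeplitz (hb : ∀ i j, Summable (b i j)) {L : ℝ}
    (hL : ∀ ω ∈ Set.Icc (-π) π, algebraMap ℝ _ L ≤ toeplitzSymbol b ω) (q : ℕ) :
    algebraMap ℝ _ L ≤ blockToeplitz b q := by
  let c : ι → ι → ℤ → ℂ := fun i j => Pi.single 0 (algebraMap ℝ (Matrix ι ι ℂ) L i j)
  have hc (i j : ι) : Summable (c i j) := (hasSum_pi_single 0 _).summable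
  have toeplitz_sub : blockToeplitz b q - algebraMap ℝ _ L = blockToeplitz (b - c) q := by
    rw [blockToeplitz_sub, blockToeplitz_single_zero, Algebra.algebraMap_eq_smul_one,
      Algebra.algebraMap_eq_smul_one, smul_kronecker, one_kronecker_one]
  rw [le_iff, toeplitz_sub]
  refine posSemidef_blockToeplitz (b := b - c) (fun i j => (hb i j).sub (hc i j)) (fun ω hω => ?_) q
  rw [toeplitzSymbol_sub hb hc, toeplitzSymbol_single_zero]
  exact hL ω hω

lemma tendsto_fejer_mean_toeplitzSymbol (hb : ∀ i j, Summable (b i j)) (ω : ℝ) :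
    Tendsto (fun q : ℕ => (q : ℝ)⁻¹ •
      (fourierEval ι q ω * blockToeplitz b q * (fourierEval ι q ω)ᴴ)) atTop
      (𝓝 (toeplitzSymbol b ω)) := by
  refine tendsto_pi_nhds.2 fun i => tendsto_pi_nhds.2 fun j => ?_
  refine (tendsto_fejer_mean (hasSum_toeplitzSymbol (hb i j) ω)).congr fun q => ?_
  rw [Matrix.smul_apply, fourierEval_mul_mul_conjTranspose_apply, ← Fin.sum_univ_eq_sum_range]
  simp only [← Fin.sum_univ_eq_sum_range, blockToeplitz, of_apply]

lemma algebraMap_le_fejer_mean {μ : ℝ} {q : ℕ} (hq : 0 < q) {M : Matrix (ι × Fin q) (ι × Fin q) ℂ}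
    (h : algebraMap ℝ _ μ ≤ M) (ω : ℝ) :
    algebraMap ℝ _ μ ≤ (q : ℝ)⁻¹ • (fourierEval ι q ω * M * (fourierEval ι q ω)ᴴ) := by
  have sub_eq : (q : ℝ)⁻¹ • (fourierEval ι q ω * M * (fourierEval ι q ω)ᴴ) - algebraMap ℝ _ μ =
      (q : ℝ)⁻¹ • (fourierEval ι q ω * (M - algebraMap ℝ _ μ) * (fourierEval ι q ω)ᴴ) := by
    have hq_ne : (q : ℝ) ≠ 0 := by positivity
    rw [Matrix.mul_sub, Matrix.sub_mul, smul_sub, Algebra.algebraMap_eq_smul_one,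
      Algebra.algebraMap_eq_smul_one, Matrix.mul_smul, Matrix.mul_one, Matrix.smul_mul,
      fourierEval_mul_conjTranspose_self, smul_comm μ, inv_smul_smul₀ hq_ne]
  rw [le_iff, sub_eq]
  exact (PosSemidef.mul_mul_conjTranspose_same h _).smul (inv_nonneg.2 q.cast_nonneg)

lemma tendsto_rayleigh_fejer_mean (hb : ∀ i j, Summable (b i j)) {ω L : ℝ} {w : ι → ℂ}
    (hw : w ≠ 0) (hwL : toeplitzSymbol b ω *ᵥ w = (L : ℂ) • w) :
    Tendsto (fun q : ℕ => (star w ⬝ᵥ ((q : ℝ)⁻¹ •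
      (fourierEval ι q ω * blockToeplitz b q * (fourierEval ι q ω)ᴴ)) *ᵥ w).re /
        (star w ⬝ᵥ w).re) atTop (𝓝 L) := by
  have norm_sq_pos : 0 < (star w ⬝ᵥ w).re := (pos_iff.1 (dotProduct_star_self_pos_iff.2 hw)).1
  have quadratic_form_continuous : Continuous fun A : Matrix ι ι ℂ =>
      (star w ⬝ᵥ A *ᵥ w).re / (star w ⬝ᵥ w).re := by fun_prop
  have limit_eq : (star w ⬝ᵥ toeplitzSymbol b ω *ᵥ w).re / (star w ⬝ᵥ w).re = L := by
    rw [hwL, dotProduct_smul, smul_eq_mul, re_ofReal_mul, mul_div_cancel_right₀ _ norm_sq_pos.ne']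
  simpa only [limit_eq, Function.comp_def] using
    (quadratic_form_continuous.tendsto _).comp (tendsto_fejer_mean_toeplitzSymbol hb ω)

theorem tendsto_of_isLeast_spectrum_blockToeplitz (hb : ∀ i j, Summable (b i j))
    (hsym : ∀ i j n, star (b j i n) = b i j (-n)) {l : ℕ → ℝ} {L : ℝ}
    (hl : ∀ᶠ q in atTop, IsLeast (spectrum ℝ (blockToeplitz b q)) (l q))
    (hL : IsLeast (⋃ ω ∈ Set.Icc (-π) π, spectrum ℝ (toeplitzSymbol b ω)) L) :
    Tendsto l atTop (𝓝 L) := by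
  obtain ⟨hL_mem, hL_le⟩ := hL
  have lower_bound : ∀ᶠ q in atTop, L ≤ l q := by
    have le_symbol (ω : ℝ) (hω : ω ∈ Set.Icc (-π) π) :
        algebraMap ℝ _ L ≤ toeplitzSymbol b ω :=
      (algebraMap_le_iff_le_spectrum (isHermitian_toeplitzSymbol hsym ω)).2 fun _ hx =>
        hL_le (Set.mem_biUnion hω hx)
    filter_upwards [hl] with q hlq
    exact (algebraMap_le_iff_le_spectrum (isHermitian_blockToeplitz hsym q)).1
      (algebraMap_le_blockToeplitz hb le_symbol q) _ hlq.1
  obtain ⟨ω, -, hω⟩ := Set.mem_iUnion₂.1 hL_mem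
  obtain ⟨w, hw, hwL⟩ := mem_spectrum_real_iff_exists_mulVec_eq_smul.1 hω
  refine tendsto_of_tendsto_of_tendsto_of_le_of_le' tendsto_const_nhds
    (tendsto_rayleigh_fejer_mean hb hw hwL) lower_bound ?_
  filter_upwards [hl, eventually_gt_atTop 0] with q hlq hq
  have le_toeplitz : algebraMap ℝ _ (l q) ≤ blockToeplitz b q :=
    (algebraMap_le_iff_le_spectrum (isHermitian_blockToeplitz hsym q)).2 fun _ hx => hlq.2 hx
  exact le_rayleigh_of_algebraMap_le (algebraMap_le_fejer_mean hq le_toeplitz ω) hw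

theorem block_toeplitz_extreme_eigenvalue_limits_general (hb : ∀ i j, Summable (b i j))
    (hsym : ∀ i j n, star (b j i n) = b i j (-n)) {lmin lmax : ℕ → ℝ} {Lmin Lmax : ℝ}
    (hlmin : ∀ᶠ q in atTop, IsLeast (spectrum ℝ (blockToeplitz b q)) (lmin q))
    (hlmax : ∀ᶠ q in atTop, IsGreatest (spectrum ℝ (blockToeplitz b q)) (lmax q))
    (hLmin : IsLeast (⋃ ω ∈ Set.Icc (-π) π, spectrum ℝ (toeplitzSymbol b ω)) Lmin)
    (hLmax : IsGreatest (⋃ ω ∈ Set.Icc (-π) π, spectrum ℝ (toeplitzSymbol b ω)) Lmax) :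
    Tendsto lmin atTop (𝓝 Lmin) ∧ Tendsto lmax atTop (𝓝 Lmax) := by
  refine ⟨tendsto_of_isLeast_spectrum_blockToeplitz hb hsym hlmin hLmin, ?_⟩
  have tendsto_neg : Tendsto (-lmax) atTop (𝓝 (-Lmax)) := by
    refine tendsto_of_isLeast_spectrum_blockToeplitz (b := -b) (fun i j => (hb i j).neg)
      (fun i j n => by simp [hsym]) ?_ ?_
    · filter_upwards [hlmax] with q hq
      rw [blockToeplitz_neg, ← spectrum.neg_eq]
      exact isLeast_neg_of_isGreatest hq
    · simpa only [toeplitzSymbol_neg, ← spectrum.neg_eq, Set.iUnion_neg] using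
        isLeast_neg_of_isGreatest hLmax
  simpa only [Pi.neg_apply, neg_neg] using tendsto_neg.neg

end BlockToeplitz

/-- for fixed finitely supported symbol sequences `b^{i,j}`, the
smallest (resp. largest) eigenvalue of the `kq × kq` symmetric block-Toeplitz matrix
`B̃(q)` converges, as `q → ∞`, to `min_{ω ∈ [-π,π]} λ_min(B(ω))`
(resp. `max_{ω ∈ [-π,π]} λ_max(B(ω))`), where `B(ω)` is the `k × k` Hermitian symbol
matrix with `(i,j)` entry `Σ_{m ∈ ℤ} b^{i,j}_m e^{-iωm}`. -/
theorem block_toeplitz_extreme_eigenvalue_limits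
    (k : ℕ) (hk : 0 < k)
    (b : Fin k → Fin k → ℤ → ℝ)
    (hfin : ∀ i j : Fin k, (Function.support (b i j)).Finite)
    (hsym : ∀ (i j : Fin k) (m : ℤ), b j i m = b i j (-m))
    (Bt : (q : ℕ) → Matrix (Fin k × Fin q) (Fin k × Fin q) ℝ)
    (hBt : ∀ (q : ℕ) (i j : Fin k) (m l : Fin q),
      Bt q (i, m) (j, l) = b i j ((m : ℤ) - (l : ℤ)))
    (Bom : ℝ → Matrix (Fin k) (Fin k) ℂ)
    (hBom : ∀ (ω : ℝ) (i j : Fin k),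
      Bom ω i j = ∑ᶠ m : ℤ, (b i j m : ℂ) * Complex.exp (-(Complex.I) * (ω : ℂ) * (m : ℂ)))
    (lmin lmax : ℕ → ℝ)
    -- `lmin q` is the smallest eigenvalue of `B̃(q)`:
    (hlmin : ∀ q : ℕ, 0 < q →
      (∃ v : Fin k × Fin q → ℝ, v ≠ 0 ∧ (Bt q).mulVec v = lmin q • v) ∧
      ∀ μ : ℝ, (∃ v : Fin k × Fin q → ℝ, v ≠ 0 ∧ (Bt q).mulVec v = μ • v) → lmin q ≤ μ)
    -- `lmax q` is the largest eigenvalue of `B̃(q)`: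
    (hlmax : ∀ q : ℕ, 0 < q →
      (∃ v : Fin k × Fin q → ℝ, v ≠ 0 ∧ (Bt q).mulVec v = lmax q • v) ∧
      ∀ μ : ℝ, (∃ v : Fin k × Fin q → ℝ, v ≠ 0 ∧ (Bt q).mulVec v = μ • v) → μ ≤ lmax q)
    (Lmin Lmax : ℝ)
    -- `Lmin = min_{ω ∈ [-π,π]} λ_min(B(ω))`:
    (hLmin : (∃ ω ∈ Set.Icc (-Real.pi) Real.pi,
        ∃ w : Fin k → ℂ, w ≠ 0 ∧ (Bom ω).mulVec w = (Lmin : ℂ) • w) ∧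
      ∀ ω ∈ Set.Icc (-Real.pi) Real.pi, ∀ ν : ℝ,
        (∃ w : Fin k → ℂ, w ≠ 0 ∧ (Bom ω).mulVec w = (ν : ℂ) • w) → Lmin ≤ ν)
    -- `Lmax = max_{ω ∈ [-π,π]} λ_max(B(ω))`:
    (hLmax : (∃ ω ∈ Set.Icc (-Real.pi) Real.pi,
        ∃ w : Fin k → ℂ, w ≠ 0 ∧ (Bom ω).mulVec w = (Lmax : ℂ) • w) ∧
      ∀ ω ∈ Set.Icc (-Real.pi) Real.pi, ∀ ν : ℝ,
        (∃ w : Fin k → ℂ, w ≠ 0 ∧ (Bom ω).mulVec w = (ν : ℂ) • w) → ν ≤ Lmax) :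
    Filter.Tendsto lmin Filter.atTop (nhds Lmin) ∧
    Filter.Tendsto lmax Filter.atTop (nhds Lmax) := by
  let c (i j : Fin k) (m : ℤ) : ℂ := b i j m
  have hc (i j : Fin k) : (Function.support (c i j)).Finite :=
    (hfin i j).subset fun m hm => by simpa [c] using hm
  have toeplitz_eq (q : ℕ) : Bt q = blockToeplitz b q := by
    ext ⟨i, m⟩ ⟨j, l⟩
    exact hBt q i j m l
  have symbol_eq (ω : ℝ) : Bom ω = toeplitzSymbol c ω := by
    ext i j
    rw [hBom, toeplitzSymbol_apply_eq_finsum (hc i j)]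
  simp only [toeplitz_eq, ← mem_spectrum_iff_exists_mulVec_eq_smul,
    ← spectrum_blockToeplitz_ofReal] at hlmin hlmax
  simp only [symbol_eq, ← mem_spectrum_real_iff_exists_mulVec_eq_smul] at hLmin hLmax
  refine block_toeplitz_extreme_eigenvalue_limits_general
    (fun i j => summable_of_hasFiniteSupport (hc i j)) (fun i j m => by simp [c, hsym i j])
    ((eventually_gt_atTop 0).mono hlmin) ((eventually_gt_atTop 0).mono hlmax) ?_ ?_
  · exact ⟨Set.mem_iUnion₂.2 (by simpa only [exists_prop] using hLmin.1),
      fun ν hν => (Set.mem_iUnion₂.1 hν).elim fun ω ⟨hω, h⟩ => hLmin.2 ω hω ν h⟩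
  · exact ⟨Set.mem_iUnion₂.2 (by simpa only [exists_prop] using hLmax.1),
      fun ν hν => (Set.mem_iUnion₂.1 hν).elim fun ω ⟨hω, h⟩ => hLmax.2 ω hω ν h⟩
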